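/- arXiv:1208.5505 — 6 statements merged into one kernel-verified Lean document; each statement's English description precedes it below -/
import Mathlib

section
/- Let S be the unilateral shift on the complex Hilbert space ℓ²(ℕ), S* its adjoint, P₀ the orthogonal projection onto the span of the first basis vector e₀, and let c be a real number with 0 < c < 1. Then the operator T = S + S* − c·P₀ is unitarily equivalent to S + S*: there exists a unitary operator U on ℓ²(ℕ) such that U ∘ T ∘ U⁻¹ = S + S*. -/
/-!
The operator `M = 1 + c S*` is invertible because `‖c S*‖ < 1`. With `A = S + S*`, the relations
`S* S = 1` and `S S* = 1 - P₀` give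

* `M M* = (1 + c²) + c A`, so `A` commutes with `M M*`;
* `A M = M T`, where `T = S + S* - c P₀`, so `M` intertwines `T` and `A`.

The unitary part `u = (M M*)^(-1/2) M` of the polar decomposition of `M` therefore also intertwines
them: `u T = (M M*)^(-1/2) A M = A u`. This argument only uses that `S` is an isometry and
`P₀ = 1 - S S*`, so it is carried out in a C⋆-algebra and then applied to operators on `ℓ²(ℕ)`.
-/

/-- If `a` commutes with `m * star m`, an invertible intertwiner `m` of `t` and `a` can be replaced
by a unitary one, namely the unitary part of its polar decomposition. -/
lemma exists_unitary_intertwiner {𝒜 : Type*} [CStarAlgebra 𝒜] [PartialOrder 𝒜] [StarOrderedRing 𝒜]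
    {m a t : 𝒜} (hm : IsUnit m) (hcomm : Commute (m * star m) a) (hint : m * t = a * m) :
    ∃ u ∈ unitary 𝒜, u * t = a * u := by
  have hpos : 0 ≤ m * star m := mul_star_self_nonneg m
  have hsq : CFC.sqrt (m * star m) * CFC.sqrt (m * star m) = m * star m :=
    CFC.sqrt_mul_sqrt_self _
  have hsa : star (CFC.sqrt (m * star m)) = CFC.sqrt (m * star m) :=
    (CFC.sqrt_nonneg (m * star m)).isSelfAdjoint.star_eq
  obtain ⟨r, hr⟩ : IsUnit (CFC.sqrt (m * star m)) :=
    (CFC.isUnit_sqrt_iff _).2 (hm.mul hm.star)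
  have hra : Commute (r : 𝒜) a := hr ▸ hcomm.cfcₙ_nnreal _
  rw [← hr] at hsq hsa
  have hsa' : star (↑r⁻¹ : 𝒜) = ↑r⁻¹ := by
    have hrr : star r = r := Units.ext hsa
    rw [← Units.coe_star, star_inv, hrr]
  refine ⟨↑r⁻¹ * m, ?_, ?_⟩
  · refine (r⁻¹.isUnit.mul hm).mem_unitary_of_mul_star_self ?_
    rw [star_mul, hsa', mul_assoc, ← mul_assoc m, ← hsq]
    simp
  · rw [mul_assoc, hint, ← mul_assoc, ← mul_assoc, hra.units_inv_left.eq]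

/-- The abstract form of the result: `s` is an isometry and `1 - s * star s` is the projection onto
the complement of its range. -/
lemma exists_unitary_of_isometry {𝒜 : Type*} [CStarAlgebra 𝒜] [PartialOrder 𝒜] [StarOrderedRing 𝒜]
    {s : 𝒜} (hs : star s * s = 1) {c : ℝ} (hc0 : 0 < c) (hc1 : c < 1) :
    ∃ u ∈ unitary 𝒜,
      u * (s + star s - (c : ℂ) • (1 - s * star s)) = (s + star s) * u := by
  have hnorm : ‖star s‖ ≤ 1 := by
    nontriviality 𝒜
    have h := CStarRing.norm_star_mul_self (x := s)
    rw [hs, norm_one] at h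
    rw [norm_star]
    nlinarith [norm_nonneg s]
  have hunit : IsUnit (1 + (c : ℂ) • star s) := by
    have h : ‖-((c : ℂ) • star s)‖ < 1 := by
      rw [norm_neg, norm_smul, Complex.norm_real, Real.norm_of_nonneg hc0.le]
      nlinarith
    simpa using isUnit_one_sub_of_norm_lt_one h
  refine exists_unitary_intertwiner hunit ?_ ?_
  · have h : (1 + (c : ℂ) • star s) * star (1 + (c : ℂ) • star s)
        = (1 + (c : ℂ) * c) • (1 : 𝒜) + (c : ℂ) • (s + star s) := by
      simp only [star_add, star_one, star_smul, star_star, mul_add, add_mul, one_mul, mul_one,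
        smul_mul_smul_comm, hs, Complex.star_def, Complex.conj_ofReal, add_smul, smul_add, one_smul]
      abel
    rw [h]
    exact ((Commute.one_left _).smul_left _).add_left ((Commute.refl _).smul_left _)
  · have h0 : star s * (s * star s) = star s := by rw [← mul_assoc, hs, one_mul]
    simp only [mul_add, add_mul, mul_sub, one_mul, mul_one, smul_mul_assoc, mul_smul_comm, hs,
      smul_sub, smul_add, h0]
    abel

lemma adjoint_shift_apply (S : lp (fun _ : ℕ => ℂ) 2 →L[ℂ] lp (fun _ : ℕ => ℂ) 2)
    (hS0 : ∀ ξ : lp (fun _ : ℕ => ℂ) 2, S ξ 0 = 0)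
    (hS : ∀ (ξ : lp (fun _ : ℕ => ℂ) 2) (n : ℕ), S ξ (n + 1) = ξ n)
    (ξ : lp (fun _ : ℕ => ℂ) 2) (n : ℕ) :
    ContinuousLinearMap.adjoint S ξ n = ξ (n + 1) := by
  have hsingle : S (lp.single 2 n (1 : ℂ)) = lp.single 2 (n + 1) (1 : ℂ) := by
    ext k
    cases k with
    | zero => simp [hS0, lp.single_apply]
    | succ k => simp [hS, lp.single_apply, Pi.single_apply]
  have h := ContinuousLinearMap.adjoint_inner_right S (lp.single 2 n (1 : ℂ)) ξ
  rw [hsingle, lp.inner_single_left, lp.inner_single_left] at h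
  simpa using h


/-- For the unilateral shift `S` on `ℓ²(ℕ)`, its adjoint `S*`, the projection
`P₀` onto the span of `e₀`, and `0 < c < 1`, the operator `T = S + S* - c • P₀` is unitarily
equivalent to `S + S*`. -/
theorem shift_minus_rank_one_unitarily_equiv
    (S P₀ : lp (fun _ : ℕ => ℂ) 2 →L[ℂ] lp (fun _ : ℕ => ℂ) 2)
    (hS0 : ∀ ξ : lp (fun _ : ℕ => ℂ) 2, S ξ 0 = 0)
    (hS : ∀ (ξ : lp (fun _ : ℕ => ℂ) 2) (n : ℕ), S ξ (n + 1) = ξ n)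
    (hP0 : ∀ ξ : lp (fun _ : ℕ => ℂ) 2, P₀ ξ 0 = ξ 0)
    (hP : ∀ (ξ : lp (fun _ : ℕ => ℂ) 2) (n : ℕ), P₀ ξ (n + 1) = 0)
    (c : ℝ) (hc0 : 0 < c) (hc1 : c < 1) :
    ∃ U : lp (fun _ : ℕ => ℂ) 2 ≃ₗᵢ[ℂ] lp (fun _ : ℕ => ℂ) 2,
      ∀ ξ : lp (fun _ : ℕ => ℂ) 2,
        U ((S + ContinuousLinearMap.adjoint S - (c : ℂ) • P₀) (U.symm ξ))
          = (S + ContinuousLinearMap.adjoint S) ξ := by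
  have hadj := adjoint_shift_apply S hS0 hS
  have hisom : star S * S = 1 := by
    ext ξ n
    simp [ContinuousLinearMap.star_eq_adjoint, hadj, hS]
  have hproj : P₀ = 1 - S * star S := by
    ext ξ n
    cases n with
    | zero => simp [hP0, hS0]
    | succ n => simp [ContinuousLinearMap.star_eq_adjoint, hP, hS, hadj]
  obtain ⟨u, hu, hut⟩ := exists_unitary_of_isometry hisom hc0 hc1
  refine ⟨Unitary.linearIsometryEquiv ⟨u, hu⟩, fun ξ => ?_⟩
  set U := Unitary.linearIsometryEquiv (⟨u, hu⟩ : unitary _) with hU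
  have hUu : ∀ η, U η = u η := fun η => rfl
  rw [hUu, hproj, ← ContinuousLinearMap.star_eq_adjoint]
  have h := DFunLike.congr_fun hut (U.symm ξ)
  rw [mul_apply_eq_comp, mul_apply_eq_comp, ← hUu (U.symm ξ),
    U.apply_symm_apply] at h
  exact h
end

section
/- Let S be the unilateral shift on ℓ²(ℕ), S* its adjoint, P₀ the orthogonal projection onto the span of e₀, and let c be real with 0 < c < 1. Then the spectrum of T = S + S* − c·P₀ (as a bounded operator on the complex Hilbert space ℓ²(ℕ)) is equal to the spectrum of S + S*. -/
/-!
Every `l : ℂ` can be written `l = z + z⁻¹` with `0 < ‖z‖ ≤ 1`. For every scalar `c` with `‖c‖ < 1`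
(including `c = 0`), `l - (S + S* - c P₀)` is invertible exactly when `‖z‖ < 1`, a condition that
does not involve `c`.

* If `‖z‖ < 1`, the relations `S* S = 1`, `P₀ S = 0` and `S* P₀ = 0` give the factorization
  `z (l - (S + S* - c P₀)) = (1 - z S*) (1 + c z P₀) (1 - z S)`, and all three factors are
  invertible because `‖S‖ ≤ 1`, `P₀² = P₀` and `‖c z‖ < 1` (`isUnit_of_norm_lt_one`).
* If `‖z‖ = 1`, a preimage `u` of `e₀` would solve `u (n + 2) = l u (n + 1) - u n`. The
  characteristic roots `z, z⁻¹` of this recurrence lie on the unit circle, so its only solution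
  tending to zero is `u = 0` (`recurrence_eq_zero`), which is not a preimage of `e₀`
  (`not_isUnit_of_norm_eq_one`).
-/

open Filter Topology

local notation "H" => lp (fun _ : ℕ => ℂ) 2

lemma exists_add_inv_eq (l : ℂ) : ∃ z : ℂ, z ≠ 0 ∧ ‖z‖ ≤ 1 ∧ l = z + z⁻¹ := by
  obtain ⟨s, hs⟩ := IsAlgClosed.exists_pow_nat_eq (l ^ 2 - 4) (n := 2) two_pos
  -- A root of `w ^ 2 - l * w + 1`; the other root is `w⁻¹`.
  set w := (l + s) / 2 with hw
  have hq : w * (l - w) = 1 := by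
    rw [hw]
    linear_combination -hs / 4
  have hw0 : w ≠ 0 := left_ne_zero_of_mul_eq_one hq
  have hinv : w⁻¹ = l - w := inv_eq_of_mul_eq_one_right hq
  rcases le_total ‖w‖ 1 with h | h
  · exact ⟨w, hw0, h, by rw [hinv]; ring⟩
  · exact ⟨w⁻¹, inv_ne_zero hw0, by rw [norm_inv]; exact inv_le_one_of_one_le₀ h,
      by rw [inv_inv, hinv]; ring⟩

/-- A sequence with constant ratio of modulus one that tends to zero vanishes. -/
lemma geometric_eq_zero {v : ℕ → ℂ} {w : ℂ} (hw : ‖w‖ = 1) (hv : ∀ n, v (n + 1) = w * v n)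
    (h0 : Tendsto v atTop (𝓝 0)) (n : ℕ) : v n = 0 := by
  have hc : ∀ n, ‖v n‖ = ‖v 0‖ := by
    intro n
    induction n with
    | zero => rfl
    | succ k ih => rw [hv, norm_mul, hw, one_mul, ih]
  have h1 : Tendsto (fun n => ‖v n‖) atTop (𝓝 0) := by simpa using h0.norm
  simp only [hc] at h1
  rw [← norm_eq_zero, hc]
  exact tendsto_nhds_unique tendsto_const_nhds h1

lemma recurrence_eq_zero {u : ℕ → ℂ} {z : ℂ} (hz : ‖z‖ = 1)
    (hu : ∀ n, u (n + 2) = (z + z⁻¹) * u (n + 1) - u n)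
    (h0 : Tendsto u atTop (𝓝 0)) (n : ℕ) : u n = 0 := by
  have hz0 : z ≠ 0 := by
    rintro rfl
    simp at hz
  have h1 : Tendsto (fun n => u (n + 1)) atTop (𝓝 0) := h0.comp (tendsto_add_atTop_nat 1)
  -- Removing the root `z` leaves a geometric sequence of ratio `z⁻¹`.
  have hv : ∀ n, u (n + 1) - z * u n = 0 := by
    refine geometric_eq_zero (v := fun n => u (n + 1) - z * u n) (w := z⁻¹) (by simp [hz]) ?_ ?_
    · intro n
      simp only [hu]
      field_simp
      ring
    · simpa using h1.sub (h0.const_mul z)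
  exact geometric_eq_zero hz (fun n => sub_eq_zero.mp (hv n)) h0 n

lemma tendsto_coord_zero (ξ : H) : Tendsto (fun n => ξ n) atTop (𝓝 0) := by
  have h := (lp.memℓp ξ).summable (by norm_num)
  have h2 := h.tendsto_atTop_zero
  rw [tendsto_zero_iff_norm_tendsto_zero]
  have h3 := h2.sqrt
  simpa [Real.sqrt_sq] using h3

section

variable {S P₀ : H →L[ℂ] H}

lemma adjoint_apply_coord
    (hS0 : ∀ ξ : H, S ξ 0 = 0) (hS : ∀ (ξ : H) (n : ℕ), S ξ (n + 1) = ξ n) (ξ : H) (n : ℕ) :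
    ContinuousLinearMap.adjoint S ξ n = ξ (n + 1) := by
  have hSe : S (lp.single 2 n (1 : ℂ)) = lp.single 2 (n + 1) (1 : ℂ) := by
    ext k
    rcases k with _ | k
    · simp [hS0, lp.single_apply]
    · simp [hS, lp.single_apply, Pi.single_apply]
  have h := ContinuousLinearMap.adjoint_inner_right S (lp.single 2 n (1 : ℂ)) ξ
  rw [hSe, lp.inner_single_left, lp.inner_single_left] at h
  simpa using h

lemma isUnit_of_norm_lt_one
    (hS0 : ∀ ξ : H, S ξ 0 = 0) (hS : ∀ (ξ : H) (n : ℕ), S ξ (n + 1) = ξ n)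
    (hP0 : ∀ ξ : H, P₀ ξ 0 = ξ 0) (hP : ∀ (ξ : H) (n : ℕ), P₀ ξ (n + 1) = 0)
    {c z : ℂ} (hc : ‖c‖ < 1) (hz0 : z ≠ 0) (hz : ‖z‖ < 1) :
    IsUnit (algebraMap ℂ (H →L[ℂ] H) (z + z⁻¹)
      - (S + ContinuousLinearMap.adjoint S - c • P₀)) := by
  have hA := adjoint_apply_coord hS0 hS
  set A := ContinuousLinearMap.adjoint S with hAdef
  have hAS : A * S = 1 := by
    ext ξ n
    simp [hA, hS]
  have hPS : P₀ * S = 0 := by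
    ext ξ n
    rcases n with _ | n <;> simp [hP0, hP, hS0]
  have hAP : A * P₀ = 0 := by
    ext ξ n
    simp [hA, hP]
  have hPP : P₀ * P₀ = P₀ := by
    ext ξ n
    rcases n with _ | n <;> simp [hP0, hP]
  have hSn : ‖S‖ ≤ 1 := by
    refine S.opNorm_le_bound zero_le_one fun ξ => ?_
    have h : inner ℂ (S ξ) (S ξ) = inner ℂ ξ ξ := by
      rw [← ContinuousLinearMap.adjoint_inner_right]
      exact congrArg (inner ℂ ξ) (DFunLike.congr_fun hAS ξ)
    rw [inner_self_eq_norm_sq_to_K, inner_self_eq_norm_sq_to_K] at h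
    have h' : ‖S ξ‖ ^ 2 = ‖ξ‖ ^ 2 := by exact_mod_cast h
    rw [one_mul]
    exact (pow_le_pow_iff_left₀ (norm_nonneg _) (norm_nonneg _) two_ne_zero).mp h'.le
  have hAn : ‖A‖ ≤ 1 := by rwa [hAdef, LinearIsometryEquiv.norm_map]
  have small : ∀ B : H →L[ℂ] H, ‖B‖ ≤ 1 → IsUnit (1 - z • B) := by
    intro B hB
    apply isUnit_one_sub_of_norm_lt_one
    rw [norm_smul]
    exact (mul_le_of_le_one_right (norm_nonneg z) hB).trans_lt hz
  have hcz : 1 + c * z ≠ 0 := by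
    intro h
    have h1 : c * z = -1 := by linear_combination h
    have h2 : ‖c‖ * ‖z‖ = 1 := by rw [← norm_mul, h1]; simp
    nlinarith [norm_nonneg c, norm_nonneg z]
  -- The inverse of `1 + a P` for an idempotent `P` is `1 - a (1 + a)⁻¹ P`.
  have hmid : IsUnit (1 + (c * z) • P₀) := by
    have hs : c * z - c * z / (1 + c * z) - c * z * (c * z / (1 + c * z)) = 0 := by
      field_simp
      ring
    refine ⟨⟨1 + (c * z) • P₀, 1 - (c * z / (1 + c * z)) • P₀, ?_, ?_⟩, rfl⟩
    · simp only [add_mul, mul_sub, one_mul, mul_one, smul_mul_smul_comm, hPP]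
      linear_combination (norm := module) hs • P₀
    · simp only [sub_mul, mul_add, one_mul, mul_one, smul_mul_smul_comm, hPP]
      linear_combination (norm := module) hs • P₀
  have hfac : algebraMap ℂ (H →L[ℂ] H) (z + z⁻¹) - (S + A - c • P₀)
      = z⁻¹ • ((1 - z • A) * (1 + (c * z) • P₀) * (1 - z • S)) := by
    rw [eq_inv_smul_iff₀ hz0]
    have e1 : (1 - z • A) * (1 + (c * z) • P₀) = 1 - z • A + (c * z) • P₀ := by
      simp only [sub_mul, mul_add, one_mul, mul_one, smul_mul_smul_comm, hAP, smul_zero]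
      abel
    rw [e1]
    simp only [add_mul, sub_mul, mul_sub, one_mul, mul_one, smul_mul_smul_comm, hAS, hPS,
      smul_zero, Algebra.algebraMap_eq_smul_one]
    match_scalars <;> field_simp <;> ring
  rw [hfac]
  exact (((small A hAn).mul hmid).mul (small S hSn)).smul (Units.mk0 z⁻¹ (inv_ne_zero hz0))

lemma not_isUnit_of_norm_eq_one
    (hS0 : ∀ ξ : H, S ξ 0 = 0) (hS : ∀ (ξ : H) (n : ℕ), S ξ (n + 1) = ξ n)
    (hP : ∀ (ξ : H) (n : ℕ), P₀ ξ (n + 1) = 0) {c z : ℂ} (hz : ‖z‖ = 1) :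
    ¬ IsUnit (algebraMap ℂ (H →L[ℂ] H) (z + z⁻¹)
      - (S + ContinuousLinearMap.adjoint S - c • P₀)) := by
  rintro ⟨U, hU⟩
  have hA := adjoint_apply_coord hS0 hS
  set e : H := lp.single 2 0 (1 : ℂ) with he
  set u : H := (↑U⁻¹ : H →L[ℂ] H) e with hu
  have hUu : (U : H →L[ℂ] H) u = e := DFunLike.congr_fun U.mul_inv e
  rw [hU] at hUu
  have hu0 : u = 0 := by
    ext n
    refine recurrence_eq_zero (u := fun n => u n) hz (fun n => ?_) (tendsto_coord_zero u) n
    have h := congrArg (fun ξ : H => ξ (n + 1)) hUu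
    simp [Algebra.algebraMap_eq_smul_one, he, lp.single_apply] at h
    have h' : (z + z⁻¹) * u (n + 1)
        - (S u (n + 1) + ContinuousLinearMap.adjoint S u (n + 1) - c * P₀ u (n + 1)) = 0 := h
    rw [hS, hA, hP] at h'
    linear_combination -h'
  rw [hu0, map_zero] at hUu
  have h := congrArg (fun ξ : H => ξ 0) hUu
  simp [he, lp.single_apply] at h

end

/-- The spectrum of `T = S + S* - c • P₀` equals the spectrum of `S + S*`. -/
theorem spectrum_shift_minus_rank_one_eq_spectrum_shift
    (S P₀ : lp (fun _ : ℕ => ℂ) 2 →L[ℂ] lp (fun _ : ℕ => ℂ) 2)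
    (hS0 : ∀ ξ : lp (fun _ : ℕ => ℂ) 2, S ξ 0 = 0)
    (hS : ∀ (ξ : lp (fun _ : ℕ => ℂ) 2) (n : ℕ), S ξ (n + 1) = ξ n)
    (hP0 : ∀ ξ : lp (fun _ : ℕ => ℂ) 2, P₀ ξ 0 = ξ 0)
    (hP : ∀ (ξ : lp (fun _ : ℕ => ℂ) 2) (n : ℕ), P₀ ξ (n + 1) = 0)
    (c : ℝ) (hc0 : 0 < c) (hc1 : c < 1) :
    spectrum ℂ (S + ContinuousLinearMap.adjoint S - (c : ℂ) • P₀)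
      = spectrum ℂ (S + ContinuousLinearMap.adjoint S) := by
  have key : ∀ (a z : ℂ), ‖a‖ < 1 → z ≠ 0 → ‖z‖ ≤ 1 →
      (z + z⁻¹ ∈ spectrum ℂ (S + ContinuousLinearMap.adjoint S - a • P₀) ↔ ‖z‖ = 1) := by
    intro a z ha hz0 hz
    rw [spectrum.mem_iff]
    refine ⟨fun h => ?_, not_isUnit_of_norm_eq_one hS0 hS hP⟩
    by_contra hne
    exact h (isUnit_of_norm_lt_one hS0 hS hP0 hP ha hz0 (lt_of_le_of_ne hz hne))
  have hc : ‖(c : ℂ)‖ < 1 := by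
    rwa [Complex.norm_real, Real.norm_of_nonneg hc0.le]
  ext l
  obtain ⟨z, hz0, hz, rfl⟩ := exists_add_inv_eq l
  have h0 := key 0 z (by simp) hz0 hz
  rw [zero_smul, sub_zero] at h0
  rw [key c z hc hz0 hz, h0]
end

section
/- Let S be the unilateral shift on ℓ²(ℕ), S* its adjoint, P₀ the orthogonal projection onto the span of e₀, and let c be real with 0 < c < 1. If λ ∈ ℂ and ξ ∈ ℓ²(ℕ) satisfy (S + S* − c·P₀)ξ = λ·ξ with ξ ≠ 0, then λ is real and −2 ≤ λ ≤ 2. In other words, the operator T = S + S* − c·P₀ has no eigenvalues outside the interval [−2, 2]. -/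
/-!
The numerical range of the self-adjoint operator `T = S + S* - c P₀` lies in `[-2, 2]`. Pairing
`T ξ = λ ξ` with `ξ` gives `λ ‖ξ‖² = 2 Re ⟪ξ, Sξ⟫ - c |ξ₀|²`, so `λ` is real. As `S` is isometric,
`‖ξ ± Sξ‖² = 2 ‖ξ‖² ± 2 Re ⟪ξ, Sξ⟫`. The minus sign gives `λ ≤ 2`. For the plus sign, `ξ + Sξ` has
`0`-th coordinate `ξ₀`, so `2 ‖ξ‖² + 2 Re ⟪ξ, Sξ⟫ ≥ |ξ₀|² ≥ c |ξ₀|²`, which is `λ ≥ -2`.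
-/

/-- The shift is isometric, stated for a single pair `(ξ, η)` with `η` the shift of `ξ`. -/
lemma norm_sq_eq_of_shift (ξ η : lp (fun _ : ℕ => ℂ) 2)
    (h0 : η 0 = 0) (h : ∀ n : ℕ, η (n + 1) = ξ n) : ‖η‖ ^ 2 = ‖ξ‖ ^ 2 := by
  have key : inner ℂ η η = inner ℂ ξ ξ := by
    have hs : Summable (fun n : ℕ => inner ℂ (η n) (η n)) := lp.summable_inner η η
    rw [lp.inner_eq_tsum, lp.inner_eq_tsum, hs.tsum_eq_zero_add]
    simp [h0, h]
  rw [inner_self_eq_norm_sq_to_K, inner_self_eq_norm_sq_to_K] at key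
  exact_mod_cast key

lemma inner_eq_of_proj (ξ η : lp (fun _ : ℕ => ℂ) 2)
    (h0 : η 0 = ξ 0) (h : ∀ n : ℕ, η (n + 1) = 0) : inner ℂ ξ η = ((‖ξ 0‖ ^ 2 : ℝ) : ℂ) := by
  have hs : Summable (fun n : ℕ => inner ℂ (ξ n) (η n)) := lp.summable_inner ξ η
  rw [lp.inner_eq_tsum, hs.tsum_eq_zero_add]
  simp only [h0, h, inner_zero_right, tsum_zero, add_zero]
  rw [inner_self_eq_norm_sq_to_K]
  norm_cast


/-- Any eigenvalue of `T = S + S* - c • P₀` is real and lies in `[-2, 2]`. -/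
theorem eigenvalue_shift_minus_rank_one_mem_Icc
    (S P₀ : lp (fun _ : ℕ => ℂ) 2 →L[ℂ] lp (fun _ : ℕ => ℂ) 2)
    (hS0 : ∀ ξ : lp (fun _ : ℕ => ℂ) 2, S ξ 0 = 0)
    (hS : ∀ (ξ : lp (fun _ : ℕ => ℂ) 2) (n : ℕ), S ξ (n + 1) = ξ n)
    (hP0 : ∀ ξ : lp (fun _ : ℕ => ℂ) 2, P₀ ξ 0 = ξ 0)
    (hP : ∀ (ξ : lp (fun _ : ℕ => ℂ) 2) (n : ℕ), P₀ ξ (n + 1) = 0)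
    (c : ℝ) (hc0 : 0 < c) (hc1 : c < 1)
    (lam : ℂ) (ξ : lp (fun _ : ℕ => ℂ) 2) (hξ : ξ ≠ 0)
    (heig : (S + ContinuousLinearMap.adjoint S - (c : ℂ) • P₀) ξ = lam • ξ) :
    ∃ x : ℝ, lam = (x : ℂ) ∧ -2 ≤ x ∧ x ≤ 2 := by
  have hpair : inner ℂ ξ (S ξ) + inner ℂ (S ξ) ξ - (c : ℂ) * ((‖ξ 0‖ ^ 2 : ℝ) : ℂ)
      = lam * ((‖ξ‖ ^ 2 : ℝ) : ℂ) := by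
    have h := congrArg (fun v => inner ℂ ξ v) heig
    simp only [sub_apply, add_apply,
      smul_apply, inner_sub_right, inner_add_right, inner_smul_right,
      ContinuousLinearMap.adjoint_inner_right, inner_eq_of_proj ξ (P₀ ξ) (hP0 ξ) (hP ξ),
      inner_self_eq_norm_sq_to_K] at h
    rw [h]
    norm_cast
  have hre : inner ℂ ξ (S ξ) + inner ℂ (S ξ) ξ
      = ((2 * (inner ℂ ξ (S ξ)).re : ℝ) : ℂ) := by
    rw [← inner_conj_symm (S ξ) ξ, Complex.add_conj]
  have hnorm : 0 < ‖ξ‖ ^ 2 := by positivity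
  have hiso := norm_sq_eq_of_shift ξ (S ξ) (hS0 ξ) (hS ξ)
  have hplus := norm_add_sq (𝕜 := ℂ) ξ (S ξ)
  have hminus := norm_sub_sq (𝕜 := ℂ) ξ (S ξ)
  have hcoord : ‖ξ 0‖ ≤ ‖ξ + S ξ‖ := by
    have h := lp.norm_apply_le_norm (p := 2) (by norm_num) (ξ + S ξ) 0
    simpa [hS0] using h
  have hcoord2 : ‖ξ 0‖ ^ 2 ≤ ‖ξ + S ξ‖ ^ 2 := by gcongr
  have hc : c * ‖ξ 0‖ ^ 2 ≤ ‖ξ 0‖ ^ 2 := mul_le_of_le_one_left (by positivity) hc1.le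
  have hc' : 0 ≤ c * ‖ξ 0‖ ^ 2 := by positivity
  have hsq : 0 ≤ ‖ξ - S ξ‖ ^ 2 := by positivity
  simp only [RCLike.re_to_complex] at hplus hminus
  refine ⟨(2 * (inner ℂ ξ (S ξ)).re - c * ‖ξ 0‖ ^ 2) / ‖ξ‖ ^ 2, ?_, ?_, ?_⟩
  · rw [hre] at hpair
    rw [Complex.ofReal_div, eq_div_iff (by exact_mod_cast hnorm.ne'), ← hpair]
    push_cast
    ring
  · rw [le_div_iff₀ hnorm]
    linarith
  · rw [div_le_iff₀ hnorm]
    linarith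
end

section
/- Let S be the unilateral shift on ℓ²(ℕ), S* its adjoint, P₀ the orthogonal projection onto the span of e₀, and let c be real with 0 < c < 1. Then the operator T = S + S* − c·P₀ has no eigenvalues at all: for every λ ∈ ℂ, the only ξ ∈ ℓ²(ℕ) with Tξ = λ·ξ is ξ = 0. -/
/-!
In coordinates, `T ξ = lam • ξ` reads `ξ 1 = (lam + c) ξ 0` and `ξ (n+2) + ξ n = lam ξ (n+1)`.
Write `lam = z + w` with `z w = 1` and `1 ≤ ‖w‖`. Then `a n = ξ (n+1) - z ξ n` satisfies
`a (n+1) = w a n`, so `‖a 0‖ ≤ ‖a n‖`; since an `ℓ²` sequence tends to zero, `a 0 = 0`, that is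
`ξ 1 = z ξ 0`. Comparing with the first equation gives `(w + c) ξ 0 = 0`, and `w + c ≠ 0` because
`c < 1 ≤ ‖w‖`. Hence `ξ 0 = ξ 1 = 0`, and the recurrence forces `ξ = 0`.
-/

/-- The quadratic `X² - lam X + 1` has two roots with product `1`; the larger one has modulus at
least `1`. -/
lemma exists_reciprocal_pair (lam : ℂ) : ∃ z w : ℂ, z + w = lam ∧ z * w = 1 ∧ 1 ≤ ‖w‖ := by
  obtain ⟨s, hs⟩ := IsAlgClosed.exists_pow_nat_eq (lam ^ 2 - 4) (n := 2) (by norm_num)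
  have hprod : ((lam + s) / 2) * ((lam - s) / 2) = 1 := by linear_combination -hs / 4
  have hsum : (lam + s) / 2 + (lam - s) / 2 = lam := by ring
  rcases le_or_gt 1 ‖(lam - s) / 2‖ with h | h
  · exact ⟨_, _, hsum, hprod, h⟩
  · refine ⟨(lam - s) / 2, (lam + s) / 2, by rw [add_comm, hsum], by rw [mul_comm, hprod], ?_⟩
    have hn := congrArg norm hprod
    rw [norm_mul, norm_one] at hn
    nlinarith [norm_nonneg ((lam + s) / 2)]

lemma tendsto_coord_zero_s5 (ξ : lp (fun _ : ℕ => ℂ) 2) :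
    Filter.Tendsto (fun n => ξ n) Filter.atTop (nhds 0) := by
  have h := (lp.memℓp ξ).summable (by norm_num)
  have h2 := h.tendsto_atTop_zero
  simp only [ENNReal.toReal_ofNat, Real.rpow_ofNat] at h2
  rw [tendsto_zero_iff_norm_tendsto_zero]
  simpa [Real.sqrt_sq] using h2.sqrt

/-- The operator `T = S + S* - c • P₀` has no eigenvalues at all. -/
theorem shift_minus_rank_one_no_eigenvalues
    (S P₀ : lp (fun _ : ℕ => ℂ) 2 →L[ℂ] lp (fun _ : ℕ => ℂ) 2)
    (hS0 : ∀ ξ : lp (fun _ : ℕ => ℂ) 2, S ξ 0 = 0)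
    (hS : ∀ (ξ : lp (fun _ : ℕ => ℂ) 2) (n : ℕ), S ξ (n + 1) = ξ n)
    (hP0 : ∀ ξ : lp (fun _ : ℕ => ℂ) 2, P₀ ξ 0 = ξ 0)
    (hP : ∀ (ξ : lp (fun _ : ℕ => ℂ) 2) (n : ℕ), P₀ ξ (n + 1) = 0)
    (c : ℝ) (hc0 : 0 < c) (hc1 : c < 1) :
    ∀ (lam : ℂ) (ξ : lp (fun _ : ℕ => ℂ) 2),
      (S + ContinuousLinearMap.adjoint S - (c : ℂ) • P₀) ξ = lam • ξ → ξ = 0 := by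
  intro lam ξ hξ
  have hcoord (n : ℕ) : S ξ n + ξ (n + 1) - c * P₀ ξ n = lam * ξ n := by
    rw [← adjoint_shift_apply S hS0 hS ξ n]
    exact congrArg (fun η : lp (fun _ : ℕ => ℂ) 2 => η n) hξ
  have hzero : ξ 1 = (lam + c) * ξ 0 := by
    have h := hcoord 0
    rw [hS0, hP0] at h
    linear_combination h
  have hrec (n : ℕ) : ξ (n + 2) = lam * ξ (n + 1) - ξ n := by
    have h := hcoord (n + 1)
    rw [hS, hP] at h
    linear_combination h
  obtain ⟨z, w, hsum, hprod, hw⟩ := exists_reciprocal_pair lam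
  have hgeom (n : ℕ) : ξ (n + 1) - z * ξ n = w ^ n * (ξ 1 - z * ξ 0) := by
    induction n with
    | zero => simp
    | succ n ih =>
      rw [pow_succ]
      linear_combination hrec n + w * ih - ξ (n + 1) * hsum + ξ n * hprod
  have hlim : Filter.Tendsto (fun n => ‖ξ (n + 1) - z * ξ n‖) Filter.atTop (nhds 0) := by
    have h := tendsto_coord_zero_s5 ξ
    simpa using (((Filter.tendsto_add_atTop_iff_nat 1).2 h).sub (h.const_mul z)).norm
  have ha : ξ 1 - z * ξ 0 = 0 := by
    apply norm_le_zero_iff.1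
    refine ge_of_tendsto' hlim fun n => ?_
    rw [hgeom n, norm_mul, norm_pow]
    exact le_mul_of_one_le_left (norm_nonneg _) (one_le_pow₀ hw)
  have hwc : w + c ≠ 0 := by
    intro h
    rw [eq_neg_of_add_eq_zero_left h, norm_neg, Complex.norm_real, Real.norm_of_nonneg hc0.le] at hw
    linarith
  have h0 : ξ 0 = 0 := by
    refine (mul_eq_zero.1 ?_).resolve_left hwc
    linear_combination ha - hzero + ξ 0 * hsum
  have hall (n : ℕ) : ξ n = 0 ∧ ξ (n + 1) = 0 := by
    induction n with
    | zero => exact ⟨h0, by simp [hzero, h0]⟩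
    | succ n ih => exact ⟨ih.2, by rw [hrec, ih.1, ih.2]; simp⟩
  ext n
  exact (hall n).1
end

section
/- Let ξ ∈ ℓ²(ℕ × ℕ) (square-summable complex functions on ℕ × ℕ) satisfy, for all m, n ∈ ℕ: ξ(m+1, n) + (ξ(m−1, n) if m ≥ 1, and 0 if m = 0) = ξ(m, n+1) + (ξ(m, n−1) if n ≥ 1, and 0 if n = 0). Then ξ = 0. Equivalently, viewing ℓ²(ℕ×ℕ) as the Hilbert–Schmidt operators on ℓ²(ℕ), no nonzero Hilbert–Schmidt operator commutes with S + S*, where S is the unilateral shift. -/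
/-!
The relation at `(n + j + 1, n)` says that the difference `ξ(n+j+1, n+1) - ξ(n+j+2, n)` does
not depend on `n`; for `n = 0` it equals `ξ(j, 0)`. A square-summable family tends to zero along
the cofinite filter, so both terms tend to zero as `n → ∞` and `ξ(j, 0) = 0` for every `j`.
The relation then determines each slice `ξ(·, n+1)` from the slices `ξ(·, n)` and `ξ(·, n-1)`,
so they all vanish.
-/

open Filter Topology in
theorem ellTwo_tendsto_cofinite_zero {ι : Type*} (ξ : lp (fun _ : ι => ℂ) 2) :
    Tendsto (fun i => ξ i) cofinite (𝓝 0) := by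
  have hs : Summable fun i => ‖ξ i‖ ^ (2 : ℝ) := by
    simpa using (lp.memℓp ξ).summable (by norm_num)
  have h := hs.tendsto_cofinite_zero.rpow_const (p := (1 / 2 : ℝ)) (Or.inr (by norm_num))
  rw [tendsto_zero_iff_norm_tendsto_zero]
  rw [Real.zero_rpow (by norm_num)] at h
  refine h.congr fun i => ?_
  rw [← Real.rpow_mul (norm_nonneg _)]
  norm_num

/-- The left side is independent of `n`: the relation at `(n + j + 2, n + 1)` equates its
consecutive values. -/
theorem shift_relation_diagonal (f : ℕ × ℕ → ℂ)
    (hrel : ∀ m n : ℕ,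
      f (m + 1, n) + (if m = 0 then 0 else f (m - 1, n))
        = f (m, n + 1) + (if n = 0 then 0 else f (m, n - 1))) (j n : ℕ) :
    f (n + j + 1, n + 1) - f (n + j + 2, n) = f (j, 0) := by
  induction n with
  | zero =>
    have h := hrel (j + 1) 0
    simp at h
    simp only [zero_add]
    linear_combination -h
  | succ n ih =>
    have h := hrel (n + 1 + j + 1) (n + 1)
    simp at h
    rw [← ih]
    rw [show n + 1 + j = n + j + 1 by ring] at h ⊢
    linear_combination -h

/-- No nonzero vector `ξ ∈ ℓ²(ℕ × ℕ)` intertwines the two commuting copies of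
`S + S*`: if `ξ(m+1,n) + ξ(m-1,n) = ξ(m,n+1) + ξ(m,n-1)` (negative-index terms omitted)
for all `m, n`, then `ξ = 0`. -/
theorem ellTwo_prod_shift_relation_eq_zero
    (ξ : lp (fun _ : ℕ × ℕ => ℂ) 2)
    (hrel : ∀ m n : ℕ,
      ξ (m + 1, n) + (if m = 0 then 0 else ξ (m - 1, n))
        = ξ (m, n + 1) + (if n = 0 then 0 else ξ (m, n - 1))) :
    ξ = 0 := by
  have hcol : ∀ j, ξ (j, 0) = 0 := by
    intro j
    have h0 := ellTwo_tendsto_cofinite_zero ξ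
    have h1 : Function.Injective fun n : ℕ => (n + j + 1, n + 1) := by
      intro a b h
      simpa using congrArg Prod.snd h
    have h2 : Function.Injective fun n : ℕ => (n + j + 2, n) := by
      intro a b h
      simpa using congrArg Prod.snd h
    have h3 := (h0.comp h1.tendsto_cofinite).sub (h0.comp h2.tendsto_cofinite)
    refine tendsto_nhds_unique (tendsto_const_nhds (f := Filter.cofinite (α := ℕ))) ?_
    simpa [Function.comp_def, shift_relation_diagonal (fun p => ξ p) hrel j] using h3
  -- Strong induction, since the recursion in `n` looks two slices back.
  have hall : ∀ n m, ξ (m, n) = 0 := by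
    intro n
    induction n using Nat.strong_induction_on with
    | _ n ih =>
      intro m
      rcases n with _ | n
      · exact hcol m
      · have h := hrel m n
        rw [ih n (by omega), ih n (by omega), ih (n - 1) (by omega)] at h
        simpa using h.symm
  ext ⟨m, n⟩
  simpa using hall n m
end

section
/- Let S be the unilateral shift on ℓ²(ℕ), S* its adjoint, P₀ the orthogonal projection onto the span of e₀, and let c be real with 0 < c < 1. Then the self-adjoint operator T = S + S* − c·P₀ has uniform multiplicity one: there exist a finite Borel measure μ on ℝ with compact support and a unitary (surjective linear isometry) w : ℓ²(ℕ) → L²(ℝ, μ; ℂ) such that for every ξ ∈ ℓ²(ℕ), w(Tξ) agrees μ-almost everywhere with the function x ↦ x·(w ξ)(x); that is, w intertwines T with multiplication by the coordinate function on L²(ℝ, μ). -/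
/-!
A bounded self-adjoint operator `T` with a cyclic vector `v` is unitarily equivalent to
multiplication by the coordinate on `L²(ℝ, μ)`, where `μ` is the spectral measure of `T` at `v`
(`exists_unitary_of_cyclic`). To see this, apply the Riesz–Markov theorem to the positive
functional `g ↦ ⟪v, g(T) v⟫` on the spectrum and push the resulting measure forward to `ℝ`. Then
`‖f(T) v‖ = ‖f‖` in `L²(μ)` for every bounded continuous `f` on `ℝ`, so `f(T) v ↦ f` extends to a
unitary: its domain is dense because `v` is cyclic, its range because bounded continuous functions
are dense in `L²(μ)`. On the spectrum the coordinate agrees with its truncation `X`, so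
`T (f(T) v) = (X f)(T) v` is sent to `X f`, which equals `x f(x)` for `μ`-almost every `x`.

For `T = S + S* - c P₀` the vector `e₀` is cyclic, since
`e (n + 1) = T (e n) - S* (e n) + c P₀ (e n)`, where `S* (e n)` is `e (n - 1)` (or `0` for
`n = 0`) and `P₀ (e n)` is a multiple of `e₀`.
-/

open MeasureTheory

open scoped ENNReal BoundedContinuousFunction CompactlySupported

section SpectralTheorem

variable {H : Type*} [NormedAddCommGroup H] [InnerProductSpace ℂ H] [CompleteSpace H]

/-- A continuous real function on the complex spectrum of `T`, regarded as a complex function. -/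
noncomputable def complexify (T : H →L[ℂ] H) (g : C(spectrum ℂ T, ℝ)) : C(spectrum ℂ T, ℂ) :=
  ⟨fun z => (g z : ℂ), by fun_prop⟩

/-- `‖F(T) v‖² = ⟪v, |F|²(T) v⟫`, because `F(T)* F(T) = |F|²(T)`. -/
lemma norm_sq_cfcHom_apply {T : H →L[ℂ] H} (hT : IsStarNormal T) (v : H)
    (F : C(spectrum ℂ T, ℂ)) :
    ‖cfcHom hT F v‖ ^ 2 =
      (inner ℂ v (cfcHom hT (complexify T ⟨fun z => ‖F z‖ ^ 2, by fun_prop⟩) v)).re := by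
  have h : complexify T ⟨fun z => ‖F z‖ ^ 2, by fun_prop⟩ = star F * F := by
    ext z
    simp [complexify, ← Complex.conj_mul']
  rw [h, map_mul, map_star, mul_apply_eq_comp, ContinuousLinearMap.star_eq_adjoint,
    ContinuousLinearMap.adjoint_inner_right, inner_self_eq_norm_sq_to_K]
  norm_cast

/-- The vector state `g ↦ Re ⟪v, g(T) v⟫`. It is positive since a nonnegative `g` is the square
of `√g`. -/
noncomputable def vectorState {T : H →L[ℂ] H} (hT : IsStarNormal T) (v : H) :
    C_c(spectrum ℂ T, ℝ) →ₚ[ℝ] ℝ :=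
  PositiveLinearMap.mk₀
    { toFun := fun g => (inner ℂ v (cfcHom hT (complexify T g.toContinuousMap) v)).re
      map_add' := by
        intro f g
        have : complexify T (f + g).toContinuousMap =
            complexify T f.toContinuousMap + complexify T g.toContinuousMap := by
          ext z; simp [complexify]
        rw [this]; simp
      map_smul' := by
        intro r g
        have : complexify T (r • g).toContinuousMap =
            (r : ℂ) • complexify T g.toContinuousMap := by
          ext z; simp [complexify]
        rw [this]; simp }
    (by
      intro g hg
      have h := norm_sq_cfcHom_apply hT v
        (complexify T ⟨fun z => √(g z), by fun_prop⟩)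
      have e : (⟨fun z => ‖(complexify T ⟨fun z => √(g z), by fun_prop⟩) z‖ ^ 2,
          by fun_prop⟩ : C(spectrum ℂ T, ℝ)) = g.toContinuousMap := by
        ext z
        have hz : 0 ≤ g z := hg z
        simp [complexify, Real.sq_sqrt hz]
      rw [e] at h
      exact (sq_nonneg _).trans_eq h)

/-- The pullback of a function on `ℝ` to the complex spectrum, along `z ↦ Re z`. -/
noncomputable def resSpectrum (T : H →L[ℂ] H) (f : ℝ →ᵇ ℂ) : C(spectrum ℂ T, ℂ) :=
  ⟨fun z => f (z : ℂ).re, by fun_prop⟩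

/-- The orbit map `f ↦ f(T) v`, with `f(T)` standing for `(f ∘ Re)(T)`, on bounded
continuous functions. -/
noncomputable def orbitMap {T : H →L[ℂ] H} (hT : IsStarNormal T) (v : H) : (ℝ →ᵇ ℂ) →ₗ[ℂ] H where
  toFun f := cfcHom hT (resSpectrum T f) v
  map_add' f g := by
    have : resSpectrum T (f + g) = resSpectrum T f + resSpectrum T g := rfl
    simp [this]
  map_smul' r f := by
    have : resSpectrum T (r • f) = r • resSpectrum T f := rfl
    simp [this]

/-- Existence of the spectral measure of `T` at `v`: `f` has `L²(μ)` norm `‖f(T) v‖`. It is the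
Riesz–Markov measure of the vector state on the spectrum, pushed forward to `ℝ`. -/
theorem exists_spectral_measure {T : H →L[ℂ] H} (hT : IsStarNormal T) (v : H) {K : Set ℝ}
    (hKm : MeasurableSet K) (hK : ∀ z ∈ spectrum ℂ T, z.re ∈ K) :
    ∃ (μ : Measure ℝ) (_ : IsFiniteMeasure μ), μ Kᶜ = 0 ∧
      ∀ f : ℝ →ᵇ ℂ, ‖BoundedContinuousFunction.toLp 2 μ ℂ f‖ = ‖orbitMap hT v f‖ := by
  have : CompactSpace (spectrum ℂ T) := isCompact_iff_compactSpace.mp (spectrum.isCompact T)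
  let ν := RealRMK.rieszMeasure (vectorState hT v)
  have hre : Continuous fun z : spectrum ℂ T => (z : ℂ).re := by fun_prop
  refine ⟨ν.map fun z : spectrum ℂ T => (z : ℂ).re, inferInstance, ?_, fun f => ?_⟩
  · rw [Measure.map_apply hre.measurable hKm.compl]
    convert measure_empty (μ := ν)
    ext z
    simpa using hK z z.2
  rw [← sq_eq_sq₀ (norm_nonneg _) (norm_nonneg _)]
  have h1 : ‖orbitMap hT v f‖ ^ 2 = ∫ z, ‖f (z : ℂ).re‖ ^ 2 ∂ν :=
    (norm_sq_cfcHom_apply hT v (resSpectrum T f)).trans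
      (RealRMK.integral_rieszMeasure (vectorState hT v)
        ⟨⟨fun z => ‖resSpectrum T f z‖ ^ 2, by fun_prop⟩,
          HasCompactSupport.of_compactSpace _⟩).symm
  rw [h1, ← integral_map (φ := fun z : spectrum ℂ T => (z : ℂ).re) (f := fun x => ‖f x‖ ^ 2)
    hre.aemeasurable (by fun_prop)]
  set μ := ν.map fun z : spectrum ℂ T => (z : ℂ).re
  have h2 := inner_self_eq_norm_sq_to_K (𝕜 := ℂ) (BoundedContinuousFunction.toLp 2 μ ℂ f)
  rw [BoundedContinuousFunction.inner_toLp] at h2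
  have h3 : ∀ x, f x * (starRingEnd ℂ) (f x) = ((‖f x‖ ^ 2 : ℝ) : ℂ) := by
    simp [Complex.mul_conj']
  simp only [h3] at h2
  rw [integral_complex_ofReal] at h2
  have h4 : ∫ x, ‖f x‖ ^ 2 ∂μ = ‖BoundedContinuousFunction.toLp 2 μ ℂ f‖ ^ 2 := by
    exact Complex.ofReal_injective (h2.trans (by push_cast; rfl))
  exact h4.symm

/-- The coordinate function truncated to `[-R, R]`, hence bounded. -/
noncomputable def truncCoord {R : ℝ} (hR : 0 ≤ R) : ℝ →ᵇ ℂ :=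
  BoundedContinuousFunction.ofNormedAddCommGroup
    (fun x => ((max (-R) (min x R) : ℝ) : ℂ)) (by fun_prop) R (by
      intro x
      rw [Complex.norm_real, Real.norm_eq_abs, abs_le]
      exact ⟨le_max_left _ _, max_le (by linarith) (min_le_right _ _)⟩)

lemma truncCoord_apply {R : ℝ} (hR : 0 ≤ R) {x : ℝ} (hx : x ∈ Set.Icc (-R) R) :
    truncCoord hR x = x := by
  change ((max (-R) (min x R) : ℝ) : ℂ) = x
  rw [min_eq_left hx.2, max_eq_right hx.1]

lemma orbitMap_one {T : H →L[ℂ] H} (hT : IsStarNormal T) (v : H) : orbitMap hT v 1 = v := by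
  have h1 : resSpectrum T 1 = 1 := rfl
  change cfcHom hT (resSpectrum T 1) v = _
  rw [h1, map_one]
  rfl

lemma orbitMap_truncCoord_mul {T : H →L[ℂ] H} (hT : IsSelfAdjoint T) (v : H) {R : ℝ} (hR : 0 ≤ R)
    (hK : ∀ z ∈ spectrum ℂ T, z.re ∈ Set.Icc (-R) R) (f : ℝ →ᵇ ℂ) :
    orbitMap hT.isStarNormal v (truncCoord hR * f) = T (orbitMap hT.isStarNormal v f) := by
  have h1 : resSpectrum T (truncCoord hR * f) =
      (ContinuousMap.id ℂ).restrict (spectrum ℂ T) * resSpectrum T f := by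
    ext z
    change truncCoord hR (z : ℂ).re * f (z : ℂ).re = (z : ℂ) * f (z : ℂ).re
    rw [truncCoord_apply hR (hK z z.2), ← hT.mem_spectrum_eq_re z.2]
  change cfcHom hT.isStarNormal (resSpectrum T (truncCoord hR * f)) v = _
  rw [h1, map_mul, cfcHom_id]
  rfl

lemma exists_linearIsometryEquiv_of_dense {V E : Type*} [AddCommGroup V] [Module ℂ V]
    [NormedAddCommGroup E] [NormedSpace ℂ E] [CompleteSpace E] (Φ : V →ₗ[ℂ] H) (Ψ : V →ₗ[ℂ] E)
    (hΦ : DenseRange Φ) (hΨ : DenseRange Ψ) (h : ∀ f, ‖Ψ f‖ = ‖Φ f‖) :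
    ∃ w : H ≃ₗᵢ[ℂ] E, ∀ f, w (Φ f) = Ψ f :=
  ⟨(LinearEquiv.refl ℂ V).extendOfIsometry Φ Ψ hΦ hΨ h,
    LinearEquiv.extendOfIsometry_eq _ Φ Ψ hΦ hΨ h⟩

/-- **Spectral theorem for a cyclic vector**: a bounded self-adjoint operator with a cyclic vector
is unitarily equivalent to multiplication by the coordinate on some `L²(ℝ, μ)`. Cyclicity is
stated as: the only closed `T`-invariant subspace containing `v` is the whole space. -/
theorem exists_unitary_of_cyclic {T : H →L[ℂ] H} (hT : IsSelfAdjoint T) (v : H)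
    (hv : ∀ M : Submodule ℂ H, IsClosed (M : Set H) → v ∈ M → (∀ x ∈ M, T x ∈ M) → M = ⊤) :
    ∃ (μ : Measure ℝ) (_ : IsFiniteMeasure μ) (K : Set ℝ), IsCompact K ∧ μ Kᶜ = 0 ∧
      ∃ w : H ≃ₗᵢ[ℂ] Lp ℂ 2 μ,
        ∀ ξ : H, (w (T ξ) : ℝ → ℂ) =ᵐ[μ] fun x : ℝ => (x : ℂ) * (w ξ : ℝ → ℂ) x := by
  obtain ⟨R, hR, hK⟩ : ∃ R : ℝ, 0 ≤ R ∧ ∀ z ∈ spectrum ℂ T, z.re ∈ Set.Icc (-R) R := by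
    refine ⟨‖T‖ * ‖(1 : H →L[ℂ] H)‖, by positivity, fun z hz => ?_⟩
    exact abs_le.mp ((Complex.abs_re_le_norm z).trans (spectrum.norm_le_norm_mul_of_mem hz))
  obtain ⟨μ, hμ, hμK, hnorm⟩ :=
    exists_spectral_measure hT.isStarNormal v measurableSet_Icc hK
  have hΦX := orbitMap_truncCoord_mul hT v hR hK
  have hΦ1 := orbitMap_one hT.isStarNormal v
  have hXae : ∀ᵐ x ∂μ, truncCoord hR x = x := by
    filter_upwards [measure_eq_zero_iff_ae_notMem.mp hμK] with x hx
    exact truncCoord_apply hR (Set.notMem_compl_iff.mp hx)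
  generalize orbitMap hT.isStarNormal v = Φ at hnorm hΦX hΦ1
  generalize truncCoord hR = X at hΦX hXae
  have hΦd : DenseRange Φ := by
    have h := hv (LinearMap.range Φ).topologicalClosure
      (Submodule.isClosed_topologicalClosure _)
      (Submodule.le_topologicalClosure _ ⟨1, hΦ1⟩) (by
        intro x hx
        refine map_mem_closure T.continuous hx ?_
        rintro _ ⟨f, rfl⟩
        exact ⟨X * f, hΦX f⟩)
    rw [← Submodule.dense_iff_topologicalClosure_eq_top] at h
    exact h
  have hΨd : DenseRange
      (BoundedContinuousFunction.toLp 2 μ ℂ : (ℝ →ᵇ ℂ) →L[ℂ] Lp ℂ 2 μ).toLinearMap :=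
    BoundedContinuousFunction.toLp_denseRange ℂ μ ℂ (by simp)
  obtain ⟨w, hw⟩ : ∃ w : H ≃ₗᵢ[ℂ] Lp ℂ 2 μ,
      ∀ f, w (Φ f) = BoundedContinuousFunction.toLp 2 μ ℂ f :=
    exists_linearIsometryEquiv_of_dense Φ _ hΦd hΨd hnorm
  -- the bounded operator of multiplication by the coordinate on `L²(ℝ, μ)`
  obtain ⟨A, hA⟩ : ∃ A : Lp ℂ 2 μ →L[ℂ] Lp ℂ 2 μ,
      ∀ g, (A g : ℝ → ℂ) =ᵐ[μ] fun x => (x : ℂ) * g x := by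
    refine ⟨(ContinuousLinearMap.mul ℂ ℂ).holderL μ ∞ 2 2
      (BoundedContinuousFunction.toLp ∞ μ ℂ X), fun g => ?_⟩
    filter_upwards [(ContinuousLinearMap.mul ℂ ℂ).coeFn_holder (r := 2)
      (BoundedContinuousFunction.toLp ∞ μ ℂ X) g, hXae,
      BoundedContinuousFunction.coeFn_toLp ∞ μ ℂ X] with x h1 h2 h3
    refine h1.trans ?_
    rw [h3, h2]
    rfl
  have hwT (ξ : H) : w (T ξ) = A (w ξ) := by
    refine hΦd.induction_on (p := fun ξ => w (T ξ) = A (w ξ)) ξ ?_ ?_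
    · exact isClosed_eq (by fun_prop) (by fun_prop)
    · intro f
      rw [← hΦX, hw, hw]
      refine Lp.ext ?_
      filter_upwards [hA (BoundedContinuousFunction.toLp 2 μ ℂ f), hXae,
        BoundedContinuousFunction.coeFn_toLp 2 μ ℂ f,
        BoundedContinuousFunction.coeFn_toLp 2 μ ℂ (X * f)] with x h1 h2 h3 h4
      rw [h1, h3, h4, BoundedContinuousFunction.mul_apply, h2]
  refine ⟨μ, hμ, Set.Icc (-R) R, isCompact_Icc, hμK, w, fun ξ => ?_⟩
  rw [hwT]
  exact hA (w ξ)

end SpectralTheorem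

/-- `T = S + S* - c • P₀` has uniform multiplicity one: it is unitarily
equivalent to multiplication by the coordinate function on `L²(ℝ, μ)` for some finite,
compactly supported Borel measure `μ` on `ℝ`. -/
theorem shift_minus_rank_one_uniform_multiplicity_one
    (S P₀ : lp (fun _ : ℕ => ℂ) 2 →L[ℂ] lp (fun _ : ℕ => ℂ) 2)
    (hS0 : ∀ ξ : lp (fun _ : ℕ => ℂ) 2, S ξ 0 = 0)
    (hS : ∀ (ξ : lp (fun _ : ℕ => ℂ) 2) (n : ℕ), S ξ (n + 1) = ξ n)
    (hP0 : ∀ ξ : lp (fun _ : ℕ => ℂ) 2, P₀ ξ 0 = ξ 0)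
    (hP : ∀ (ξ : lp (fun _ : ℕ => ℂ) 2) (n : ℕ), P₀ ξ (n + 1) = 0)
    (c : ℝ) (hc0 : 0 < c) (hc1 : c < 1) :
    ∃ (μ : Measure ℝ) (_ : IsFiniteMeasure μ) (K : Set ℝ), IsCompact K ∧ μ Kᶜ = 0 ∧
      ∃ w : lp (fun _ : ℕ => ℂ) 2 ≃ₗᵢ[ℂ] Lp ℂ 2 μ,
        ∀ ξ : lp (fun _ : ℕ => ℂ) 2,
          (w ((S + ContinuousLinearMap.adjoint S - (c : ℂ) • P₀) ξ) : ℝ → ℂ)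
            =ᵐ[μ] fun x : ℝ => (x : ℂ) * (w ξ : ℝ → ℂ) x := by
  let e : ℕ → lp (fun _ : ℕ => ℂ) 2 := fun n => lp.single 2 n 1
  have heS (n : ℕ) : S (e n) = e (n + 1) := by
    ext k
    cases k with
    | zero => simp [hS0, e]
    | succ k => simp [hS, e, Pi.single_apply]
  have hadj (ξ : lp (fun _ : ℕ => ℂ) 2) (n : ℕ) :
      ContinuousLinearMap.adjoint S ξ n = ξ (n + 1) := by
    have h := ContinuousLinearMap.adjoint_inner_right S (e n) ξ
    rw [heS] at h
    simpa [e, lp.inner_single_left] using h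
  have hP0e (ξ : lp (fun _ : ℕ => ℂ) 2) : P₀ ξ = ξ 0 • e 0 := by
    ext k
    cases k with
    | zero => simp [hP0, e]
    | succ k => simp [hP, e]
  have hPsa : IsSelfAdjoint P₀ := by
    rw [ContinuousLinearMap.isSelfAdjoint_iff_isSymmetric]
    intro x y
    simp [hP0e, inner_smul_left, inner_smul_right, e, lp.inner_single_left,
      lp.inner_single_right, mul_comm]
  have hT : IsSelfAdjoint (S + ContinuousLinearMap.adjoint S - (c : ℂ) • P₀) := by
    refine (IsSelfAdjoint.add_star_self S).sub (IsSelfAdjoint.smul ?_ hPsa)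
    simp [isSelfAdjoint_iff]
  refine exists_unitary_of_cyclic hT (e 0) fun M hM h0 hTM => ?_
  -- Carrying `S* (e n) ∈ M` along spares the induction a separate case for `e (n - 1)`.
  have hmem (n : ℕ) : e n ∈ M ∧ ContinuousLinearMap.adjoint S (e n) ∈ M := by
    induction n with
    | zero =>
      have : ContinuousLinearMap.adjoint S (e 0) = 0 := by
        ext k; simp [hadj, e]
      exact ⟨h0, this ▸ M.zero_mem⟩
    | succ n ih =>
      have h1 : ContinuousLinearMap.adjoint S (e (n + 1)) = e n := by
        ext k; simp [hadj, e, Pi.single_apply]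
      refine ⟨?_, h1 ▸ ih.1⟩
      have h2 : e (n + 1) = (S + ContinuousLinearMap.adjoint S - (c : ℂ) • P₀) (e n)
          - ContinuousLinearMap.adjoint S (e n) + ((c : ℂ) * e n 0) • e 0 := by
        have h3 : (c : ℂ) • P₀ (e n) = ((c : ℂ) * e n 0) • e 0 := by rw [hP0e, mul_smul]
        rw [← heS, ← h3, sub_apply, add_apply, smul_apply]
        abel
      rw [h2]
      exact M.add_mem (M.sub_mem (hTM _ ih.1) ih.2) (M.smul_mem _ h0)
  rw [eq_top_iff]
  intro ξ _
  have hs : HasSum (fun n => lp.single 2 n (ξ n)) ξ := lp.hasSum_single (by simp) ξ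
  refine hM.mem_of_tendsto hs (Filter.Eventually.of_forall fun s => M.sum_mem fun n _ => ?_)
  have : lp.single 2 n (ξ n) = ξ n • e n := by
    simp [e, ← lp.single_smul]
  exact this ▸ M.smul_mem _ (hmem n).1
end
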